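/- arXiv:1601.08132 — 4 statements merged into one kernel-verified Lean document; each statement's English description precedes it below -/
import Mathlib

section
/- (Theorem 9, Blind IA, macrocell projection.) Let T, N, K, L, M be positive integers with L ≤ N, and fix k ∈ {1,…,K}. Let: v₁,…,v_K be 1×T complex row vectors (macrocell beamforming vectors, V_i = (a/√N)(v_iᵀ ⊗ I_N)); for each l ∈ {1,…,L} with l ≠ 2, let ξ_{l,1},…,ξ_{l,T−1} be 1×T row vectors, r the N×(N−L+1) matrix consisting of the first N−L+1 columns of I_N, and q_{l,1},…,q_{l,T−1} be (N−L+1)×M complex matrices, and set V_l^f = (b₁/√N)·Σ_{i=1}^{T−1} (ξ_{l,i}ᵀ ⊗ (r·q_{l,i})); let v_f be a 1×T row vector and e₂ the last column of I_N (as an N×1 matrix), and set V₂^f = (b₂/√N)·(v_fᵀ ⊗ e₂). Let h_a and h_l (l = 1,…,L) be N×N channel matrices, h̃ an N×N matrix, e₁ the N×1 column vector equal to the sum of the first N−1 columns of I_N, D₁ = diag(e₂), D₂ = diag(e₁), and w₁, w₂ be 1×T row vectors. Assume: (i) w_s·v_iᵀ = 0 for s = 1,2 and all i ≠ k; (ii)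 w₂·ξ_{l,i}ᵀ = 0 for all i ∈ {1,…,T−1} and all l ≠ 2; (iii) w₁·v_fᵀ = 0; (iv) D₁·h̃·h_l·r = 0 for all l ≠ 2; (v) D₂·h̃·h₂·e₂ = 0. Let u₁,…,u_K ∈ ℂ^N, U_l ∈ ℂ^M (l ≠ 2), U₂ ∈ ℂ, Z ∈ ℂ^{NT}, and define the received signal y = √γ_a·(I_T ⊗ h_a)·Σ_{i=1}^{K} V_i·u_i + Σ_{l≠2} √γ_l·(I_T ⊗ h_l)·V_l^f·U_l + √γ₂·(I_T ⊗ h₂)·V₂^f·U₂ + Z, and the projection matrix P = Σ_{s=1}^{2} (w_s ⊗ (D_s·h̃)). Then P·y = (a/√N)·(Σ_{s=1}^{2} (w_s·v_kᵀ)·D_s)·(√γ_a·h̃·h_a)·u_k + P·Z. -/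
open Matrix
open scoped Kronecker

lemma kron_key {T N n m : ℕ} (w : Matrix (Fin 1) (Fin T) ℂ) (D h : Matrix (Fin N) (Fin N) ℂ)
    (s : Matrix (Fin T) (Fin 1) ℂ) (B : Matrix (Fin N) (Fin n) ℂ)
    (X : Matrix (Fin 1 × Fin n) (Fin m) ℂ) :
    (w ⊗ₖ D) * (((1 : Matrix (Fin T) (Fin T) ℂ) ⊗ₖ h) * ((s ⊗ₖ B) * X))
      = ((w * s) ⊗ₖ (D * h * B)) * X := by
  rw [← Matrix.mul_assoc, ← Matrix.mul_assoc, ← Matrix.mul_kronecker_mul,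
    ← Matrix.mul_kronecker_mul, Matrix.mul_one]

/-- Theorem 9, Blind IA, macrocell projection: the projection
`P = Σ_s (w_s ⊗ (D_s·h̃))` removes both intra-cell interference (messages to the
other `K−1` macrocell users) and inter-cell interference (all femtocell
transmissions) at macrocell receiver `k`, leaving the effective channel
`(a/√N)·(Σ_s (w_s·v_kᵀ)·D_s)·(√γ_a·h̃·h_a)` acting on `u_k`.
The group-`G₂` femtocell is indexed by a distinguished `l₂` (the paper's `l = 2`);
vectors in `ℂ^N`, `ℂ^M`, `ℂ` are column matrices over `Fin 1 × Fin N`,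
`Fin 1 × Fin M`, `Fin 1 × Fin 1` respectively, matching the Kronecker block
structure. -/
theorem blindIA_macrocell_projection
    (T N K L M : ℕ) (hT : 0 < T) (hN : 0 < N) (hK : 0 < K) (hL : 0 < L)
    (hM : 0 < M) (hLN : L ≤ N)
    (k : Fin K) (l₂ : Fin L)
    (a b₁ b₂ : ℝ) (hapos : 0 < a) (hb₁ : 0 < b₁) (hb₂ : 0 < b₂)
    (γa : ℝ) (hγa : 0 < γa) (γ : Fin L → ℝ) (hγ : ∀ l, 0 < γ l)
    -- macrocell beamforming row vectors and matrices
    (v : Fin K → Matrix (Fin 1) (Fin T) ℂ)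
    (V : Fin K → Matrix (Fin T × Fin N) (Fin 1 × Fin N) ℂ)
    (hV : ∀ i, V i = ((a / Real.sqrt N : ℝ) : ℂ) •
      ((v i)ᵀ ⊗ₖ (1 : Matrix (Fin N) (Fin N) ℂ)))
    -- group G₁ femtocell beamforming data
    (ξ : Fin L → Fin (T - 1) → Matrix (Fin 1) (Fin T) ℂ)
    (q : Fin L → Fin (T - 1) → Matrix (Fin (N - L + 1)) (Fin M) ℂ)
    (r : Matrix (Fin N) (Fin (N - L + 1)) ℂ)
    (hr : r = Matrix.of fun (i : Fin N) (j : Fin (N - L + 1)) => if (i : ℕ) = (j : ℕ) then 1 else 0)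
    (Vf : Fin L → Matrix (Fin T × Fin N) (Fin 1 × Fin M) ℂ)
    (hVf : ∀ l, Vf l = ((b₁ / Real.sqrt N : ℝ) : ℂ) •
      ∑ i : Fin (T - 1), ((ξ l i)ᵀ ⊗ₖ (r * q l i)))
    -- group G₂ femtocell beamforming data
    (vf : Matrix (Fin 1) (Fin T) ℂ)
    (e₁ e₂ : Matrix (Fin N) (Fin 1) ℂ)
    (he₁ : e₁ = Matrix.of fun (i : Fin N) (_ : Fin 1) => if (i : ℕ) < N - 1 then 1 else 0)
    (he₂ : e₂ = Matrix.of fun (i : Fin N) (_ : Fin 1) => if (i : ℕ) = N - 1 then 1 else 0)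
    (Vg : Matrix (Fin T × Fin N) (Fin 1 × Fin 1) ℂ)
    (hVg : Vg = ((b₂ / Real.sqrt N : ℝ) : ℂ) • (vfᵀ ⊗ₖ e₂))
    -- channels and the projection building blocks
    (hca : Matrix (Fin N) (Fin N) ℂ) (hc : Fin L → Matrix (Fin N) (Fin N) ℂ)
    (htil : Matrix (Fin N) (Fin N) ℂ)
    (D₁ D₂ : Matrix (Fin N) (Fin N) ℂ)
    (hD₁ : D₁ = Matrix.diagonal fun i => e₂ i 0)
    (hD₂ : D₂ = Matrix.diagonal fun i => e₁ i 0)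
    (w₁ w₂ : Matrix (Fin 1) (Fin T) ℂ)
    -- orthogonality assumptions (i)-(v)
    (hw₁v : ∀ i, i ≠ k → w₁ * (v i)ᵀ = 0)
    (hw₂v : ∀ i, i ≠ k → w₂ * (v i)ᵀ = 0)
    (hw₂ξ : ∀ l, l ≠ l₂ → ∀ i, w₂ * (ξ l i)ᵀ = 0)
    (hw₁vf : w₁ * vfᵀ = 0)
    (hD₁r : ∀ l, l ≠ l₂ → D₁ * htil * hc l * r = 0)
    (hD₂e : D₂ * htil * hc l₂ * e₂ = 0)
    -- data, noise, received signal, projection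
    (u : Fin K → Matrix (Fin 1 × Fin N) (Fin 1) ℂ)
    (U : Fin L → Matrix (Fin 1 × Fin M) (Fin 1) ℂ)
    (U₂ : Matrix (Fin 1 × Fin 1) (Fin 1) ℂ)
    (Z : Matrix (Fin T × Fin N) (Fin 1) ℂ)
    (y : Matrix (Fin T × Fin N) (Fin 1) ℂ)
    (hy : y = (Real.sqrt γa : ℂ) •
            (((1 : Matrix (Fin T) (Fin T) ℂ) ⊗ₖ hca) * (∑ i : Fin K, V i * u i))
        + (∑ l ∈ Finset.univ.erase l₂, (Real.sqrt (γ l) : ℂ) •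
            (((1 : Matrix (Fin T) (Fin T) ℂ) ⊗ₖ hc l) * (Vf l * U l)))
        + (Real.sqrt (γ l₂) : ℂ) •
            (((1 : Matrix (Fin T) (Fin T) ℂ) ⊗ₖ hc l₂) * (Vg * U₂))
        + Z)
    (P : Matrix (Fin 1 × Fin N) (Fin T × Fin N) ℂ)
    (hP : P = w₁ ⊗ₖ (D₁ * htil) + w₂ ⊗ₖ (D₂ * htil)) :
    P * y = ((a / Real.sqrt N : ℝ) : ℂ) •
      (((1 : Matrix (Fin 1) (Fin 1) ℂ) ⊗ₖ
          (((w₁ * (v k)ᵀ) 0 0 • D₁ + (w₂ * (v k)ᵀ) 0 0 • D₂) *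
            ((Real.sqrt γa : ℂ) • (htil * hca)))) * u k)
      + P * Z := by
  have hG1 : ∀ l ∈ Finset.univ.erase l₂, P * ((Real.sqrt (γ l) : ℂ) •
      (((1 : Matrix (Fin T) (Fin T) ℂ) ⊗ₖ hc l) * (Vf l * U l))) = 0 := by
    intro l hl
    have hl' : l ≠ l₂ := Finset.ne_of_mem_erase hl
    rw [hVf, hP]
    simp only [Matrix.mul_smul, Matrix.smul_mul, Matrix.sum_mul, Matrix.mul_sum, Matrix.add_mul,
      kron_key]
    simp only [← Matrix.mul_assoc, hD₁r l hl', hw₂ξ l hl', Matrix.zero_mul,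
      Matrix.kronecker_zero, Matrix.zero_kronecker, add_zero, Finset.sum_const_zero, smul_zero]
  have hG2 : P * ((Real.sqrt (γ l₂) : ℂ) •
      (((1 : Matrix (Fin T) (Fin T) ℂ) ⊗ₖ hc l₂) * (Vg * U₂))) = 0 := by
    rw [hVg, hP]
    simp only [Matrix.mul_smul, Matrix.smul_mul, Matrix.add_mul, kron_key]
    simp only [hD₂e, hw₁vf, Matrix.zero_mul,
      Matrix.kronecker_zero, Matrix.zero_kronecker, add_zero, smul_zero]
  have hM : P * ((Real.sqrt γa : ℂ) •
            (((1 : Matrix (Fin T) (Fin T) ℂ) ⊗ₖ hca) * (∑ i : Fin K, V i * u i)))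
      = ((a / Real.sqrt N : ℝ) : ℂ) •
      (((1 : Matrix (Fin 1) (Fin 1) ℂ) ⊗ₖ
          (((w₁ * (v k)ᵀ) 0 0 • D₁ + (w₂ * (v k)ᵀ) 0 0 • D₂) *
            ((Real.sqrt γa : ℂ) • (htil * hca)))) * u k) := by
    have h1 : ∀ A : Matrix (Fin 1) (Fin 1) ℂ, A = A 0 0 • (1 : Matrix (Fin 1) (Fin 1) ℂ) := by
      intro A
      ext i j
      fin_cases i
      fin_cases j
      simp
    rw [Matrix.mul_sum, Finset.smul_sum, Matrix.mul_sum, Finset.sum_eq_single k]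
    · rw [hV, hP]
      simp only [Matrix.mul_smul, Matrix.smul_mul, Matrix.add_mul, kron_key, Matrix.mul_one]
      rw [h1 (w₁ * (v k)ᵀ), h1 (w₂ * (v k)ᵀ)]
      simp only [Matrix.smul_kronecker, Matrix.kronecker_smul, Matrix.kronecker_add,
        Matrix.smul_mul, Matrix.add_mul, Matrix.mul_assoc, Matrix.smul_apply, Matrix.one_apply_eq,
        smul_eq_mul, mul_one]
      rw [smul_comm]
    · intro i _ hi
      rw [hV, hP]
      simp only [Matrix.mul_smul, Matrix.smul_mul, Matrix.add_mul, kron_key, hw₁v i hi, hw₂v i hi,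
        Matrix.zero_kronecker, Matrix.zero_mul, add_zero, smul_zero]
    · intro h
      exact absurd (Finset.mem_univ k) h
  rw [hy, Matrix.mul_add, Matrix.mul_add, Matrix.mul_add, hM, hG2, Matrix.mul_sum,
    Finset.sum_eq_zero hG1, add_zero, add_zero]
end

section
/- (Theorem 11, Blind IA, group-G₁ femtocell projection.) Let T, N, K, M, p be positive integers. Let v₁,…,v_K be 1×T complex row vectors (macrocell beamforming vectors, V_i = (a/√N)(v_iᵀ ⊗ I_N)); let ξ₁,…,ξ_{T−1} be 1×T row vectors, r an N×p complex matrix, q₁,…,q_{T−1} be p×M complex matrices, and V^f = (b₁/√N)·Σ_{i=1}^{T−1} (ξ_iᵀ ⊗ (r·q_i)); let v_g be a 1×T row vector, e₂ an N×1 column vector, and V^g = (b₂/√N)·(v_gᵀ ⊗ e₂). Let h_f, h_A, h_g be N×N complex channel matrices, γ_f, γ_A, γ_g > 0 reals, w a 1×T complex row vector and W an M×N complex matrix. Assume w·v_iᵀ = 0 for all i ∈ {1,…,K} and W·h_g·e₂ = 0. Let U ∈ ℂ^M, u₁,…,u_K ∈ ℂ^N, U_g ∈ ℂ, Z ∈ ℂ^{NT},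 and define y = √γ_f·(I_T ⊗ h_f)·V^f·U + √γ_A·(I_T ⊗ h_A)·Σ_{i=1}^{K} V_i·u_i + √γ_g·(I_T ⊗ h_g)·V^g·U_g + Z, and P = w ⊗ W. Then P·y = (b₁/√N)·(√γ_f·W·h_f·r)·(Σ_{i=1}^{T−1} (w·ξ_iᵀ)·q_i)·U + P·Z. -/
open Matrix
open scoped Kronecker

/-- Theorem 11, Blind IA, group-G₁ femtocell projection: the projection
`P = w ⊗ W` removes the macrocell interference and the group-G₂ femtocell
interference at a group-G₁ femtocell receiver, leaving the effective channel
`(b₁/√N)·(√γ_f·W·h_f·r)·(Σ_i (w·ξ_iᵀ)·q_i)` acting on the data `U`. -/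
theorem blindIA_groupG1_femtocell_projection
    (T N K M p : ℕ) (hT : 0 < T) (hN : 0 < N) (hK : 0 < K) (hM : 0 < M) (hp : 0 < p)
    (a b₁ b₂ : ℝ) (hapos : 0 < a) (hb₁ : 0 < b₁) (hb₂ : 0 < b₂)
    (γf γA γg : ℝ) (hγf : 0 < γf) (hγA : 0 < γA) (hγg : 0 < γg)
    -- macrocell beamforming
    (v : Fin K → Matrix (Fin 1) (Fin T) ℂ)
    (V : Fin K → Matrix (Fin T × Fin N) (Fin 1 × Fin N) ℂ)
    (hV : ∀ i, V i = ((a / Real.sqrt N : ℝ) : ℂ) •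
      ((v i)ᵀ ⊗ₖ (1 : Matrix (Fin N) (Fin N) ℂ)))
    -- own (group G₁) beamforming
    (ξ : Fin (T - 1) → Matrix (Fin 1) (Fin T) ℂ)
    (r : Matrix (Fin N) (Fin p) ℂ)
    (q : Fin (T - 1) → Matrix (Fin p) (Fin M) ℂ)
    (Vf : Matrix (Fin T × Fin N) (Fin 1 × Fin M) ℂ)
    (hVf : Vf = ((b₁ / Real.sqrt N : ℝ) : ℂ) •
      ∑ i : Fin (T - 1), ((ξ i)ᵀ ⊗ₖ (r * q i)))
    -- interfering group-G₂ beamforming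
    (vg : Matrix (Fin 1) (Fin T) ℂ)
    (e₂ : Matrix (Fin N) (Fin 1) ℂ)
    (Vg : Matrix (Fin T × Fin N) (Fin 1 × Fin 1) ℂ)
    (hVg : Vg = ((b₂ / Real.sqrt N : ℝ) : ℂ) • (vgᵀ ⊗ₖ e₂))
    -- channels
    (hf hA hg : Matrix (Fin N) (Fin N) ℂ)
    -- projection building blocks and orthogonality assumptions
    (w : Matrix (Fin 1) (Fin T) ℂ) (W : Matrix (Fin M) (Fin N) ℂ)
    (hwv : ∀ i : Fin K, w * (v i)ᵀ = 0)
    (hWg : W * hg * e₂ = 0)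
    -- data, noise, received signal, projection
    (U : Matrix (Fin 1 × Fin M) (Fin 1) ℂ)
    (u : Fin K → Matrix (Fin 1 × Fin N) (Fin 1) ℂ)
    (Ug : Matrix (Fin 1 × Fin 1) (Fin 1) ℂ)
    (Z : Matrix (Fin T × Fin N) (Fin 1) ℂ)
    (y : Matrix (Fin T × Fin N) (Fin 1) ℂ)
    (hy : y = (Real.sqrt γf : ℂ) •
            (((1 : Matrix (Fin T) (Fin T) ℂ) ⊗ₖ hf) * (Vf * U))
        + (Real.sqrt γA : ℂ) •
            (((1 : Matrix (Fin T) (Fin T) ℂ) ⊗ₖ hA) * (∑ i : Fin K, V i * u i))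
        + (Real.sqrt γg : ℂ) •
            (((1 : Matrix (Fin T) (Fin T) ℂ) ⊗ₖ hg) * (Vg * Ug))
        + Z)
    (P : Matrix (Fin 1 × Fin M) (Fin T × Fin N) ℂ)
    (hP : P = w ⊗ₖ W) :
    P * y = ((b₁ / Real.sqrt N : ℝ) : ℂ) •
      (((1 : Matrix (Fin 1) (Fin 1) ℂ) ⊗ₖ
          (((Real.sqrt γf : ℂ) • (W * hf * r)) *
            (∑ i : Fin (T - 1), (w * (ξ i)ᵀ) 0 0 • q i))) * U)
      + P * Z := by
  have hPk : ∀ h : Matrix (Fin N) (Fin N) ℂ,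
      P * ((1 : Matrix (Fin T) (Fin T) ℂ) ⊗ₖ h) = w ⊗ₖ (W * h) := by
    intro h
    rw [hP, ← Matrix.mul_kronecker_mul, Matrix.mul_one]
  have h1 : ∀ X : Matrix (Fin 1) (Fin 1) ℂ, X = X 0 0 • (1 : Matrix (Fin 1) (Fin 1) ℂ) := by
    intro X
    ext i j
    fin_cases i; fin_cases j
    simp
  have hA0 : P * (((1 : Matrix (Fin T) (Fin T) ℂ) ⊗ₖ hA) * (∑ i : Fin K, V i * u i)) = 0 := by
    rw [← Matrix.mul_assoc, hPk, Matrix.mul_sum]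
    refine Finset.sum_eq_zero fun i _ => ?_
    rw [hV, ← Matrix.mul_assoc, Matrix.mul_smul, ← Matrix.mul_kronecker_mul, hwv,
      Matrix.zero_kronecker, smul_zero, Matrix.zero_mul]
  have hg0 : P * (((1 : Matrix (Fin T) (Fin T) ℂ) ⊗ₖ hg) * (Vg * Ug)) = 0 := by
    rw [← Matrix.mul_assoc, hPk, hVg, ← Matrix.mul_assoc, Matrix.mul_smul,
      ← Matrix.mul_kronecker_mul, hWg, Matrix.kronecker_zero, smul_zero, Matrix.zero_mul]
  have hsum : ∀ f : Fin (T - 1) → Matrix (Fin M) (Fin M) ℂ,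
      (1 : Matrix (Fin 1) (Fin 1) ℂ) ⊗ₖ (∑ i, f i)
        = ∑ i, (1 : Matrix (Fin 1) (Fin 1) ℂ) ⊗ₖ f i := by
    intro f
    ext i j
    simp [Matrix.sum_apply, Matrix.kroneckerMap_apply, Finset.mul_sum]
  have hf1 : P * (((1 : Matrix (Fin T) (Fin T) ℂ) ⊗ₖ hf) * (Vf * U))
      = ((b₁ / Real.sqrt N : ℝ) : ℂ) • (((1 : Matrix (Fin 1) (Fin 1) ℂ) ⊗ₖ
          ((W * hf * r) * (∑ i : Fin (T - 1), (w * (ξ i)ᵀ) 0 0 • q i))) * U) := by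
    rw [← Matrix.mul_assoc, hPk, hVf, ← Matrix.mul_assoc, Matrix.mul_smul, Matrix.smul_mul,
      Matrix.mul_sum, Matrix.mul_sum, hsum]
    congr 2
    refine Finset.sum_congr rfl fun i _ => ?_
    rw [← Matrix.mul_kronecker_mul, h1 (w * (ξ i)ᵀ), Matrix.smul_kronecker, Matrix.mul_smul,
      Matrix.kronecker_smul, ← Matrix.mul_assoc]
    simp
  rw [hy, Matrix.mul_add, Matrix.mul_add, Matrix.mul_add, Matrix.mul_smul, Matrix.mul_smul,
    Matrix.mul_smul, hA0, hg0, hf1, smul_zero, smul_zero, add_zero, add_zero, Matrix.smul_mul,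
    Matrix.kronecker_smul, Matrix.smul_mul, smul_comm]
end

section
/- (Theorem 13, Blind IA, group-G₂ femtocell projection.) Let T, N, K, L, M, p be positive integers. Let v₁,…,v_K be 1×T complex row vectors (macrocell beamforming vectors, V_i = (a/√N)(v_iᵀ ⊗ I_N)); for each l ∈ {1,…,L} with l ≠ 2, let ξ_{l,1},…,ξ_{l,T−1} be 1×T row vectors, r an N×p complex matrix, q_{l,1},…,q_{l,T−1} be p×M complex matrices, and V_l^f = (b₁/√N)·Σ_{i=1}^{T−1} (ξ_{l,i}ᵀ ⊗ (r·q_{l,i})); let v_g be a 1×T row vector, e₂ an N×1 column vector, and V^g = (b₂/√N)·(v_gᵀ ⊗ e₂). Let h_g, h_A, and h_l (l ≠ 2) be N×N complex channel matrices, γ_g, γ_A, γ_l > 0 reals, w a 1×T complex row vector and W a 1×N complex row vector. Assume w·v_iᵀ = 0 for all i ∈ {1,…,K} and W·h_l·r = 0 for all l ≠ 2. Let U ∈ ℂ, u₁,…,u_K ∈ ℂ^N, U_l ∈ ℂ^M, Z ∈ ℂ^{NT}, and define y = √γ_g·(I_T ⊗ h_g)·V^g·U + √γ_A·(I_T ⊗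 h_A)·Σ_{i=1}^{K} V_i·u_i + Σ_{l≠2} √γ_l·(I_T ⊗ h_l)·V_l^f·U_l + Z, and P = w ⊗ W. Then P·y = (b₂/√N)·(w·v_gᵀ)·(√γ_g·W·h_g·e₂)·U + P·Z. -/
open Matrix
open scoped Kronecker

/-- Theorem 13, Blind IA, group-G₂ femtocell projection: the projection
`P = w ⊗ W` removes the macrocell interference and all group-G₁ femtocell
interference at the group-G₂ femtocell receiver, leaving the scalar effective channel
`(b₂/√N)·(w·v_gᵀ)·(√γ_g·W·h_g·e₂)` acting on the data `U`. The group-G₂ index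
(the paper's `l = 2`) is a distinguished `l₂ : Fin L`. -/
theorem blindIA_groupG2_femtocell_projection
    (T N K L M p : ℕ) (hT : 0 < T) (hN : 0 < N) (hK : 0 < K) (hL : 0 < L)
    (hM : 0 < M) (hp : 0 < p)
    (l₂ : Fin L)
    (a b₁ b₂ : ℝ) (hapos : 0 < a) (hb₁ : 0 < b₁) (hb₂ : 0 < b₂)
    (γg γA : ℝ) (hγg : 0 < γg) (hγA : 0 < γA)
    (γ : Fin L → ℝ) (hγ : ∀ l, l ≠ l₂ → 0 < γ l)
    -- macrocell beamforming
    (v : Fin K → Matrix (Fin 1) (Fin T) ℂ)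
    (V : Fin K → Matrix (Fin T × Fin N) (Fin 1 × Fin N) ℂ)
    (hV : ∀ i, V i = ((a / Real.sqrt N : ℝ) : ℂ) •
      ((v i)ᵀ ⊗ₖ (1 : Matrix (Fin N) (Fin N) ℂ)))
    -- group-G₁ beamforming (interference), for l ≠ l₂
    (ξ : Fin L → Fin (T - 1) → Matrix (Fin 1) (Fin T) ℂ)
    (r : Matrix (Fin N) (Fin p) ℂ)
    (q : Fin L → Fin (T - 1) → Matrix (Fin p) (Fin M) ℂ)
    (Vf : Fin L → Matrix (Fin T × Fin N) (Fin 1 × Fin M) ℂ)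
    (hVf : ∀ l, Vf l = ((b₁ / Real.sqrt N : ℝ) : ℂ) •
      ∑ i : Fin (T - 1), ((ξ l i)ᵀ ⊗ₖ (r * q l i)))
    -- own (group G₂) beamforming
    (vg : Matrix (Fin 1) (Fin T) ℂ)
    (e₂ : Matrix (Fin N) (Fin 1) ℂ)
    (Vg : Matrix (Fin T × Fin N) (Fin 1 × Fin 1) ℂ)
    (hVg : Vg = ((b₂ / Real.sqrt N : ℝ) : ℂ) • (vgᵀ ⊗ₖ e₂))
    -- channels
    (hg hA : Matrix (Fin N) (Fin N) ℂ) (hc : Fin L → Matrix (Fin N) (Fin N) ℂ)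
    -- projection building blocks and orthogonality assumptions
    (w : Matrix (Fin 1) (Fin T) ℂ) (W : Matrix (Fin 1) (Fin N) ℂ)
    (hwv : ∀ i : Fin K, w * (v i)ᵀ = 0)
    (hWr : ∀ l, l ≠ l₂ → W * hc l * r = 0)
    -- data, noise, received signal, projection
    (U : Matrix (Fin 1 × Fin 1) (Fin 1) ℂ)
    (u : Fin K → Matrix (Fin 1 × Fin N) (Fin 1) ℂ)
    (Uf : Fin L → Matrix (Fin 1 × Fin M) (Fin 1) ℂ)
    (Z : Matrix (Fin T × Fin N) (Fin 1) ℂ)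
    (y : Matrix (Fin T × Fin N) (Fin 1) ℂ)
    (hy : y = (Real.sqrt γg : ℂ) •
            (((1 : Matrix (Fin T) (Fin T) ℂ) ⊗ₖ hg) * (Vg * U))
        + (Real.sqrt γA : ℂ) •
            (((1 : Matrix (Fin T) (Fin T) ℂ) ⊗ₖ hA) * (∑ i : Fin K, V i * u i))
        + (∑ l ∈ Finset.univ.erase l₂, (Real.sqrt (γ l) : ℂ) •
            (((1 : Matrix (Fin T) (Fin T) ℂ) ⊗ₖ hc l) * (Vf l * Uf l)))
        + Z)
    (P : Matrix (Fin 1 × Fin 1) (Fin T × Fin N) ℂ)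
    (hP : P = w ⊗ₖ W) :
    P * y = ((b₂ / Real.sqrt N : ℝ) : ℂ) •
      ((w * vgᵀ) 0 0 •
        ((((1 : Matrix (Fin 1) (Fin 1) ℂ) ⊗ₖ
            ((Real.sqrt γg : ℂ) • (W * hg * e₂))) * U)))
      + P * Z := by
  have key : ∀ (H : Matrix (Fin N) (Fin N) ℂ),
      (w ⊗ₖ W) * ((1 : Matrix (Fin T) (Fin T) ℂ) ⊗ₖ H) = w ⊗ₖ (W * H) := by
    intro H
    rw [← Matrix.mul_kronecker_mul, Matrix.mul_one]
  have h1 : (w ⊗ₖ W) * (((1 : Matrix (Fin T) (Fin T) ℂ) ⊗ₖ hA) * (∑ i : Fin K, V i * u i))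
      = 0 := by
    rw [← Matrix.mul_assoc, key, Matrix.mul_sum]
    refine Finset.sum_eq_zero fun i _ => ?_
    rw [hV i, ← Matrix.mul_assoc, Matrix.mul_smul, ← Matrix.mul_kronecker_mul, hwv i,
      Matrix.zero_kronecker, smul_zero, Matrix.zero_mul]
  have h2 : ∀ l, l ≠ l₂ → (w ⊗ₖ W) *
      (((1 : Matrix (Fin T) (Fin T) ℂ) ⊗ₖ hc l) * (Vf l * Uf l)) = 0 := by
    intro l hl
    have h3 : (w ⊗ₖ (W * hc l)) * Vf l = 0 := by
      rw [hVf l, Matrix.mul_smul, Matrix.mul_sum, Finset.sum_eq_zero, smul_zero]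
      intro i _
      rw [← Matrix.mul_kronecker_mul, ← Matrix.mul_assoc, hWr l hl, Matrix.zero_mul,
        Matrix.kronecker_zero]
    rw [← Matrix.mul_assoc, key, ← Matrix.mul_assoc, h3, Matrix.zero_mul]
  have h4 : (w ⊗ₖ W) * (((1 : Matrix (Fin T) (Fin T) ℂ) ⊗ₖ hg) * (Vg * U))
      = ((b₂ / Real.sqrt N : ℝ) : ℂ) • (((w * vgᵀ) ⊗ₖ (W * hg * e₂)) * U) := by
    rw [← Matrix.mul_assoc, key, ← Matrix.mul_assoc, hVg, Matrix.mul_smul,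
      ← Matrix.mul_kronecker_mul, Matrix.smul_mul]
  have h5 : w * vgᵀ = (w * vgᵀ) 0 0 • (1 : Matrix (Fin 1) (Fin 1) ℂ) := by
    ext i j
    fin_cases i
    fin_cases j
    simp
  have h6 : (w ⊗ₖ W) * (∑ l ∈ Finset.univ.erase l₂, (Real.sqrt (γ l) : ℂ) •
            (((1 : Matrix (Fin T) (Fin T) ℂ) ⊗ₖ hc l) * (Vf l * Uf l))) = 0 := by
    rw [Matrix.mul_sum]
    refine Finset.sum_eq_zero fun l hl => ?_
    rw [Matrix.mul_smul, h2 l (Finset.ne_of_mem_erase hl), smul_zero]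
  rw [hy, hP, Matrix.mul_add, Matrix.mul_add, Matrix.mul_add, Matrix.mul_smul, Matrix.mul_smul,
    h1, h6, h4, smul_zero, add_zero, add_zero]
  congr 1
  generalize (w * vgᵀ) 0 0 = c at h5 ⊢
  rw [h5, Matrix.smul_kronecker, Matrix.kronecker_smul, Matrix.smul_mul, Matrix.smul_mul,
    smul_comm, smul_comm c]
end

section
/- (Theorem 17, Blind IA, femtocell projection in the special case L = 1.) Let T, N, K, M, M_r be positive integers. Let v₁,…,v_K be 1×T complex row vectors (macrocell beamforming vectors, V_i = (a/√N)(v_iᵀ ⊗ I_N)); let ξ₁,…,ξ_T be 1×T row vectors, r₁,…,r_T be N×p_i complex matrices and q₁,…,q_T be p_i×M complex matrices (for appropriate inner dimensions p_i), and V^f = (b/√N)·Σ_{i=1}^{T} (ξ_iᵀ ⊗ (r_i·q_i)). Let h_f be an M_r×N complex channel matrix, h_A an M_r×N complex interference channel matrix, γ_f, γ_A > 0 reals, w a 1×T complex row vector with w·v_iᵀ = 0 for all i ∈ {1,…,K}, and W an M×M_r complex matrix. Let U ∈ ℂ^M, u₁,…,u_K ∈ ℂ^N, Z ∈ ℂ^{M_r·T},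 and define y = √γ_f·(I_T ⊗ h_f)·V^f·U + √γ_A·(I_T ⊗ h_A)·Σ_{i=1}^{K} V_i·u_i + Z, and P = w ⊗ W. Then P·y = (b/√N)·(√γ_f·W·h_f)·(Σ_{i=1}^{T} (w·ξ_iᵀ)·r_i·q_i)·U + P·Z; i.e. P removes all inter-cell interference from the macrocell at the femtocell receiver, leaving the effective channel 𝓗 = (b/√N)·𝒦·𝒟 with 𝒦 = √γ_f·W·h_f and 𝒟 = Σ_i (w·ξ_iᵀ)·r_i·q_i. -/
open Matrix
open scoped Kronecker

/-- Theorem 17, Blind IA, femtocell projection in the special case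
`L = 1`: the projection `P = w ⊗ W` removes all inter-cell interference from the
macrocell at the femtocell receiver, leaving the effective channel
`(b/√N)·(√γ_f·W·h_f)·(Σ_i (w·ξ_iᵀ)·r_i·q_i)` acting on the data `U`. Here the
antenna-selection matrices `r_i` are `N × p_i` and the message-selection matrices
`q_i` are `p_i × M`, with inner dimensions `p i` varying with `i`. -/
theorem blindIA_femtocell_projection_L_eq_one
    (T N K M Mr : ℕ) (hT : 0 < T) (hN : 0 < N) (hK : 0 < K) (hM : 0 < M)
    (hMr : 0 < Mr)
    (a b : ℝ) (hapos : 0 < a) (hbpos : 0 < b)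
    (γf γA : ℝ) (hγf : 0 < γf) (hγA : 0 < γA)
    -- macrocell beamforming
    (v : Fin K → Matrix (Fin 1) (Fin T) ℂ)
    (V : Fin K → Matrix (Fin T × Fin N) (Fin 1 × Fin N) ℂ)
    (hV : ∀ i, V i = ((a / Real.sqrt N : ℝ) : ℂ) •
      ((v i)ᵀ ⊗ₖ (1 : Matrix (Fin N) (Fin N) ℂ)))
    -- femtocell beamforming with varying inner dimensions
    (p : Fin T → ℕ)
    (ξ : Fin T → Matrix (Fin 1) (Fin T) ℂ)
    (r : (i : Fin T) → Matrix (Fin N) (Fin (p i)) ℂ)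
    (q : (i : Fin T) → Matrix (Fin (p i)) (Fin M) ℂ)
    (Vf : Matrix (Fin T × Fin N) (Fin 1 × Fin M) ℂ)
    (hVf : Vf = ((b / Real.sqrt N : ℝ) : ℂ) •
      ∑ i : Fin T, ((ξ i)ᵀ ⊗ₖ (r i * q i)))
    -- channels (the femtocell receiver has Mr antennas)
    (hf hA : Matrix (Fin Mr) (Fin N) ℂ)
    -- projection building blocks and orthogonality assumption
    (w : Matrix (Fin 1) (Fin T) ℂ) (W : Matrix (Fin M) (Fin Mr) ℂ)
    (hwv : ∀ i : Fin K, w * (v i)ᵀ = 0)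
    -- data, noise, received signal, projection
    (U : Matrix (Fin 1 × Fin M) (Fin 1) ℂ)
    (u : Fin K → Matrix (Fin 1 × Fin N) (Fin 1) ℂ)
    (Z : Matrix (Fin T × Fin Mr) (Fin 1) ℂ)
    (y : Matrix (Fin T × Fin Mr) (Fin 1) ℂ)
    (hy : y = (Real.sqrt γf : ℂ) •
            (((1 : Matrix (Fin T) (Fin T) ℂ) ⊗ₖ hf) * (Vf * U))
        + (Real.sqrt γA : ℂ) •
            (((1 : Matrix (Fin T) (Fin T) ℂ) ⊗ₖ hA) * (∑ i : Fin K, V i * u i))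
        + Z)
    (P : Matrix (Fin 1 × Fin M) (Fin T × Fin Mr) ℂ)
    (hP : P = w ⊗ₖ W) :
    P * y = ((b / Real.sqrt N : ℝ) : ℂ) •
      (((1 : Matrix (Fin 1) (Fin 1) ℂ) ⊗ₖ
          (((Real.sqrt γf : ℂ) • (W * hf)) *
            (∑ i : Fin T, (w * (ξ i)ᵀ) 0 0 • (r i * q i)))) * U)
      + P * Z := by
  have hk : ∀ (h : Matrix (Fin Mr) (Fin N) ℂ),
      (w ⊗ₖ W) * ((1 : Matrix (Fin T) (Fin T) ℂ) ⊗ₖ h) = w ⊗ₖ (W * h) := by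
    intro h
    rw [← Matrix.mul_kronecker_mul, Matrix.mul_one]
  have h1 : (w ⊗ₖ (W * hA)) * (∑ i : Fin K, V i * u i) = 0 := by
    rw [Matrix.mul_sum]
    refine Finset.sum_eq_zero fun i _ => ?_
    rw [← Matrix.mul_assoc, hV, Matrix.mul_smul, ← Matrix.mul_kronecker_mul, hwv,
      Matrix.zero_kronecker, smul_zero, Matrix.zero_mul]
  have h2 : (w ⊗ₖ (W * hf)) * (∑ i : Fin T, ((ξ i)ᵀ ⊗ₖ (r i * q i))) =
      (1 : Matrix (Fin 1) (Fin 1) ℂ) ⊗ₖ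
        ((W * hf) * (∑ i : Fin T, (w * (ξ i)ᵀ) 0 0 • (r i * q i))) := by
    rw [Matrix.mul_sum, Matrix.mul_sum]
    ext ⟨x, m⟩ ⟨x', m'⟩
    obtain rfl : x = 0 := Subsingleton.elim _ _
    obtain rfl : x' = 0 := Subsingleton.elim _ _
    rw [Matrix.kroneckerMap_apply, Matrix.sum_apply, Matrix.sum_apply, Matrix.one_apply_eq,
      one_mul]
    refine Finset.sum_congr rfl fun i _ => ?_
    rw [← Matrix.mul_kronecker_mul, Matrix.kroneckerMap_apply, Matrix.mul_smul,
      Matrix.smul_apply, smul_eq_mul]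
  rw [hy, Matrix.mul_add, Matrix.mul_add, hP, Matrix.mul_smul, Matrix.mul_smul,
    ← Matrix.mul_assoc, ← Matrix.mul_assoc, hk,
    ← Matrix.mul_assoc, hk, h1, smul_zero, add_zero, hVf, Matrix.mul_smul, h2, Matrix.smul_mul, Matrix.smul_mul,
    Matrix.kronecker_smul, Matrix.smul_mul, smul_comm]
end
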